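/- Let 𝒳 be a measurable space, 𝒳̂ a nonempty set, K > 0, and ρ : 𝒳 × 𝒳̂ → [0, K] a function such that ρ(·, x̂) is measurable for every x̂ ∈ 𝒳̂. Fix n ≥ 1, N ≥ 1, and define for a probability measure P on 𝒳 the N-codeword operational distortion-rate value D̂_N(P) := inf { D(P, 𝒞) : 𝒞 ⊆ 𝒳̂^n finite, 1 ≤ |𝒞| ≤ N }. Then for any probability measures P, Q on 𝒳: (i) |D̂_N(P) − D̂_N(Q)| ≤ K · d_V(P, Q); and (ii) if δ ≥ 0 and 𝒞* is a codebook with 1 ≤ |𝒞*| ≤ N and D(Q, 𝒞*) ≤ D̂_N(Q) + δ, then D(P, 𝒞*) ≤ D̂_N(P) + 2K · d_V(P, Q) + δ. -/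

import Mathlib

open MeasureTheory

/-- The variational distance `d_V(P,Q) = sup_B |P(B) - Q(B)|`, the supremum
over all measurable sets `B`. -/
noncomputable def dV {X : Type*} [MeasurableSpace X] (P Q : Measure X) : ℝ :=
  ⨆ B : {s : Set X // MeasurableSet s}, |(P B.1).toReal - (Q B.1).toReal|

/-- The per-letter expected distortion of the minimum-distortion encoder with
codebook `C ⊆ 𝒳̂^n` on the i.i.d. source with marginal `P`:
`D(P, C) = (1/n) ∫ min_{c ∈ C} Σ_i ρ(x_i, c_i) dP^{⊗n}(x^n)`. -/
noncomputable def Dcode {X Xh : Type*} [MeasurableSpace X] (ρ : X → Xh → ℝ) (n : ℕ)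
    (P : Measure X) (C : Finset (Fin n → Xh)) : ℝ :=
  (1 / n : ℝ) *
    ∫ x, sInf ((fun c => ∑ i, ρ (x i) (c i)) '' (C : Set (Fin n → Xh)))
      ∂(Measure.pi fun _ : Fin n => P)

/-- The `N`-codeword operational distortion-rate value
`D̂_N(P) := inf { D(P, C) : C ⊆ 𝒳̂^n finite, 1 ≤ |C| ≤ N }`. -/
noncomputable def DhatN {X Xh : Type*} [MeasurableSpace X] (ρ : X → Xh → ℝ) (n N : ℕ)
    (P : Measure X) : ℝ :=
  ⨅ C : {C : Finset (Fin n → Xh) // C.Nonempty ∧ C.card ≤ N}, Dcode ρ n P C.1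

/-
By the layer-cake formula, a function with values in an interval of length `K` has `P`- and
`Q`-integrals that differ by at most `K * dV P Q`. Replacing the marginals of a product measure one
at a time, a function that moves by at most `c i` when its `i`-th argument changes has integrals
against two product measures that differ by at most `∑ i, c i * dV (P i) (Q i)`. Changing one letter
of `x` moves the distortion of each codeword, hence the minimum over the codebook, by at most `K`;
the factor `1 / n` cancels the `n` letters, so every codebook has the same distortion under `P` and
`Q` up to `K * dV P Q`, and so does the infimum over codebooks.
-/

section VariationalDistance

variable {X : Type*} [MeasurableSpace X] {P Q : Measure X}

lemma dV_comm (P Q : Measure X) : dV P Q = dV Q P := by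
  simp only [dV, abs_sub_comm]

lemma abs_measureReal_sub_le_dV [IsFiniteMeasure P] [IsFiniteMeasure Q] {s : Set X}
    (hs : MeasurableSet s) : |P.real s - Q.real s| ≤ dV P Q := by
  refine le_ciSup (f := fun B : {s : Set X // MeasurableSet s} ↦ |P.real B.1 - Q.real B.1|)
    ⟨max (P.real Set.univ) (Q.real Set.univ), ?_⟩ ⟨s, hs⟩
  rintro _ ⟨B, rfl⟩
  exact abs_sub_le_of_nonneg_of_le measureReal_nonneg
    ((measureReal_mono (Set.subset_univ _)).trans (le_max_left _ _)) measureReal_nonneg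
    ((measureReal_mono (Set.subset_univ _)).trans (le_max_right _ _))

lemma integrableOn_measureReal_le (μ : Measure X) [IsFiniteMeasure μ] (g : X → ℝ) (a b : ℝ) :
    IntegrableOn (fun t ↦ μ.real {x | t ≤ g x}) (Set.Ioc a b) := by
  have hanti : Antitone fun t ↦ μ.real {x | t ≤ g x} := fun s t hst ↦
    measureReal_mono fun x (hx : t ≤ g x) ↦ hst.trans hx
  exact ((hanti.antitoneOn _).integrableOn_isCompact isCompact_Icc).mono_set
    Set.Ioc_subset_Icc_self

lemma integral_le_integral_add_mul_dV_of_mem_Icc [IsFiniteMeasure P] [IsFiniteMeasure Q]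
    {g : X → ℝ} (hg : Measurable g) {K : ℝ} (hK : 0 ≤ K) (hgK : ∀ x, g x ∈ Set.Icc 0 K) :
    ∫ x, g x ∂P ≤ ∫ x, g x ∂Q + K * dV P Q := by
  have layercake (μ : Measure X) [IsFiniteMeasure μ] :
      ∫ x, g x ∂μ = ∫ t in Set.Ioc 0 K, μ.real {x | t ≤ g x} :=
    (Integrable.of_mem_Icc 0 K hg.aemeasurable (.of_forall hgK)).integral_eq_integral_Ioc_meas_le
      (.of_forall fun x ↦ (hgK x).1) (.of_forall fun x ↦ (hgK x).2)
  have tail_le (t : ℝ) : P.real {x | t ≤ g x} ≤ Q.real {x | t ≤ g x} + dV P Q :=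
    sub_le_iff_le_add'.1 <| (le_abs_self _).trans <|
      abs_measureReal_sub_le_dV (measurableSet_le measurable_const hg)
  calc ∫ x, g x ∂P = ∫ t in Set.Ioc 0 K, P.real {x | t ≤ g x} := layercake P
    _ ≤ ∫ t in Set.Ioc 0 K, (Q.real {x | t ≤ g x} + dV P Q) :=
      integral_mono (integrableOn_measureReal_le P g 0 K)
        ((integrableOn_measureReal_le Q g 0 K).add (integrable_const _)) tail_le
    _ = (∫ t in Set.Ioc 0 K, Q.real {x | t ≤ g x}) + K * dV P Q := by
      rw [integral_add (integrableOn_measureReal_le Q g 0 K) (integrable_const _),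
        setIntegral_const, Real.volume_real_Ioc_of_le hK, sub_zero, smul_eq_mul]
    _ = ∫ x, g x ∂Q + K * dV P Q := by rw [layercake Q]

lemma integrable_of_forall_le_add (μ : Measure X) [IsFiniteMeasure μ] {g : X → ℝ}
    (hg : Measurable g) {K : ℝ} (hosc : ∀ x y, g x ≤ g y + K) : Integrable g μ := by
  rcases isEmpty_or_nonempty X with _ | ⟨⟨x₀⟩⟩
  · exact .of_isEmpty
  · exact .of_mem_Icc (g x₀ - K) (g x₀ + K) hg.aemeasurable
      (.of_forall fun x ↦ ⟨sub_le_iff_le_add.2 (hosc x₀ x), hosc x x₀⟩)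

lemma integral_le_integral_add_mul_dV [IsProbabilityMeasure P] [IsProbabilityMeasure Q]
    {g : X → ℝ} (hg : Measurable g) {K : ℝ} (hosc : ∀ x y, g x ≤ g y + K) :
    ∫ x, g x ∂P ≤ ∫ x, g x ∂Q + K * dV P Q := by
  have hX : Nonempty X := nonempty_of_isProbabilityMeasure P
  have x₀ : X := hX.some
  have hK : 0 ≤ K := by linarith [hosc x₀ x₀]
  have hbdd : BddBelow (Set.range g) :=
    ⟨g x₀ - K, Set.forall_mem_range.2 fun y ↦ sub_le_iff_le_add.2 (hosc x₀ y)⟩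
  have hmem (x : X) : g x - ⨅ y, g y ∈ Set.Icc 0 K :=
    ⟨sub_nonneg.2 (ciInf_le hbdd x), sub_le_iff_le_add'.2 (le_ciInf_add (hosc x))⟩
  have integral_shift (μ : Measure X) [IsProbabilityMeasure μ] :
      ∫ x, (g x - ⨅ y, g y) ∂μ = ∫ x, g x ∂μ - ⨅ y, g y := by
    rw [integral_sub (integrable_of_forall_le_add μ hg hosc) (integrable_const _)]
    simp
  have hle := integral_le_integral_add_mul_dV_of_mem_Icc (P := P) (Q := Q)
    (hg.sub_const (⨅ y, g y)) hK hmem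
  rw [integral_shift, integral_shift] at hle
  linarith

end VariationalDistance

section BoundedDifferences

variable {ι : Type*} [DecidableEq ι] {X : ι → Type*} {f : (∀ i, X i) → ℝ} {c : ι → ℝ}

/-- The bounded differences condition: changing the `i`-th argument of `f` changes its value by at
most `c i`. An upper bound suffices, since the change can be undone. -/
def HasBoundedDifferences (f : (∀ i, X i) → ℝ) (c : ι → ℝ) : Prop :=
  ∀ x i a, f (Function.update x i a) ≤ f x + c i

lemma HasBoundedDifferences.update_le_update_add (hf : HasBoundedDifferences f c) (x : ∀ i, X i)
    (i : ι) (a b : X i) : f (Function.update x i a) ≤ f (Function.update x i b) + c i := by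
  simpa using hf (Function.update x i b) i a

lemma HasBoundedDifferences.finset_inf' {κ : Type*} {s : Finset κ} (hs : s.Nonempty)
    {F : κ → (∀ i, X i) → ℝ} (hF : ∀ k ∈ s, HasBoundedDifferences (F k) c) :
    HasBoundedDifferences (s.inf' hs F) c := by
  intro x i a
  obtain ⟨k, hk, hmin⟩ := s.exists_mem_eq_inf' hs fun k ↦ F k x
  rw [Finset.inf'_apply, Finset.inf'_apply, hmin]
  exact (s.inf'_le _ hk).trans (hF k hk x i a)

variable [Fintype ι]

lemma HasBoundedDifferences.sum_comp_apply {g : ∀ i, X i → ℝ}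
    (hg : ∀ i a b, g i a ≤ g i b + c i) :
    HasBoundedDifferences (fun x ↦ ∑ i, g i (x i)) c := by
  intro x i a
  have hrest : ∑ j ∈ {i}ᶜ, g j (Function.update x i a j) = ∑ j ∈ {i}ᶜ, g j (x j) :=
    Finset.sum_congr rfl fun j hj ↦ by
      rw [Function.update_of_ne (by simpa using hj)]
  simp only [Fintype.sum_eq_add_sum_compl i, Function.update_self, hrest]
  linarith [hg i a (x i)]

/-- Telescoping along the hybrids between `y` and `x`, which are still equal to `y` at the
coordinate about to be replaced. -/
lemma le_add_sum_of_forall_update_le {x y : ∀ i, X i}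
    (h : ∀ z i, z i = y i → f (Function.update z i (x i)) ≤ f z + c i) :
    f x ≤ f y + ∑ i, c i := by
  suffices hybrid : ∀ s : Finset ι, f (s.piecewise x y) ≤ f y + ∑ i ∈ s, c i by
    simpa using hybrid Finset.univ
  intro s
  induction s using Finset.induction with
  | empty => simp
  | insert i s hi ih =>
    rw [Finset.piecewise_insert, Finset.sum_insert hi]
    linarith [h (s.piecewise x y) i (Finset.piecewise_eq_of_notMem _ _ _ hi)]

lemma HasBoundedDifferences.le_add_sum (hf : HasBoundedDifferences f c) (x y : ∀ i, X i) :
    f x ≤ f y + ∑ i, c i :=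
  le_add_sum_of_forall_update_le fun z i _ ↦ hf z i (x i)

end BoundedDifferences

section ProductMeasure

variable {ι : Type*} [Fintype ι] [DecidableEq ι] {X : ι → Type*} [∀ i, MeasurableSpace (X i)]
  {P Q : ∀ i, Measure (X i)} [∀ i, IsProbabilityMeasure (P i)] [∀ i, IsProbabilityMeasure (Q i)]
  {f : (∀ i, X i) → ℝ} {c : ι → ℝ}

lemma measurePreserving_update {i : ι} (hPQ : ∀ j ≠ i, P j = Q j) :
    MeasurePreserving (fun z : (∀ j, X j) × X i ↦ Function.update z.1 i z.2)
      ((Measure.pi P).prod (Q i)) (Measure.pi Q) := by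
  refine ⟨measurable_update', (Measure.pi_eq fun s hs ↦ ?_).symm⟩
  have preimage_box : (fun z : (∀ j, X j) × X i ↦ Function.update z.1 i z.2) ⁻¹' Set.univ.pi s =
      Set.univ.pi (Function.update s i Set.univ) ×ˢ s i := by
    ext ⟨x, a⟩
    simp only [Set.mem_preimage, Set.mem_prod, Set.mem_univ_pi,
      Function.forall_update_iff s fun j t ↦ x j ∈ t,
      Function.forall_update_iff x fun j b ↦ b ∈ s j, Set.mem_univ, true_and, and_comm]
  have hrest : ∏ j ∈ {i}ᶜ, P j (Function.update s i Set.univ j) = ∏ j ∈ {i}ᶜ, Q j (s j) :=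
    Finset.prod_congr rfl fun j hj ↦ by
      have hji : j ≠ i := by simpa using hj
      rw [Function.update_of_ne hji, hPQ j hji]
  rw [Measure.map_apply measurable_update' (.univ_pi hs), preimage_box, Measure.prod_prod,
    Measure.pi_pi, Fintype.prod_eq_mul_prod_compl i, Function.update_self, measure_univ, one_mul,
    hrest, mul_comm, ← Fintype.prod_eq_mul_prod_compl i fun j ↦ Q j (s j)]

lemma integral_pi_eq_integral_integral_update {i : ι} (hPQ : ∀ j ≠ i, P j = Q j)
    (hf : Integrable f (Measure.pi Q)) :
    ∫ x, f x ∂Measure.pi Q = ∫ x, ∫ a, f (Function.update x i a) ∂Q i ∂Measure.pi P := by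
  have hmp := measurePreserving_update hPQ
  rw [← hmp.map_eq] at hf ⊢
  rw [integral_map hmp.aemeasurable hf.aestronglyMeasurable]
  exact integral_prod _ (hf.comp_aemeasurable hmp.aemeasurable)

lemma HasBoundedDifferences.integral_pi_le_of_eq_off (hf : HasBoundedDifferences f c)
    (hfm : Measurable f) {i : ι} (hPQ : ∀ j ≠ i, P j = Q j) :
    ∫ x, f x ∂Measure.pi P ≤ ∫ x, f x ∂Measure.pi Q + c i * dV (P i) (Q i) := by
  have hint (μ : Measure (∀ i, X i)) [IsFiniteMeasure μ] : Integrable f μ :=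
    integrable_of_forall_le_add μ hfm hf.le_add_sum
  have hint_fiber {R : ∀ i, Measure (X i)} [∀ i, IsProbabilityMeasure (R i)]
      (hPR : ∀ j ≠ i, P j = R j) :
      Integrable (fun x ↦ ∫ a, f (Function.update x i a) ∂(R i)) (Measure.pi P) :=
    ((measurePreserving_update hPR).integrable_comp_of_integrable (hint _)).integral_prod_left
  have fiber_le (x : ∀ i, X i) : ∫ a, f (Function.update x i a) ∂P i ≤
      ∫ a, f (Function.update x i a) ∂Q i + c i * dV (P i) (Q i) :=
    integral_le_integral_add_mul_dV (hfm.comp (measurable_update x)) (hf.update_le_update_add x i)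
  calc ∫ x, f x ∂Measure.pi P
      = ∫ x, ∫ a, f (Function.update x i a) ∂P i ∂Measure.pi P :=
        integral_pi_eq_integral_integral_update (fun _ _ ↦ rfl) (hint _)
    _ ≤ ∫ x, (∫ a, f (Function.update x i a) ∂Q i + c i * dV (P i) (Q i)) ∂Measure.pi P :=
        integral_mono (hint_fiber fun _ _ ↦ rfl)
          ((hint_fiber hPQ).add (integrable_const _)) fiber_le
    _ = ∫ x, ∫ a, f (Function.update x i a) ∂Q i ∂Measure.pi P + c i * dV (P i) (Q i) := by
        rw [integral_add (hint_fiber hPQ) (integrable_const _)]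
        simp
    _ = ∫ x, f x ∂Measure.pi Q + c i * dV (P i) (Q i) := by
        rw [integral_pi_eq_integral_integral_update hPQ (hint _)]

lemma HasBoundedDifferences.integral_pi_le (hf : HasBoundedDifferences f c)
    (hfm : Measurable f) :
    ∫ x, f x ∂Measure.pi P ≤ ∫ x, f x ∂Measure.pi Q + ∑ i, c i * dV (P i) (Q i) := by
  -- Bundled measures keep the hybrid families probability measures.
  let bundle (R : ∀ i, Measure (X i)) [∀ i, IsProbabilityMeasure (R i)] (i : ι) :
      ProbabilityMeasure (X i) := ⟨R i, inferInstance⟩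
  refine le_add_sum_of_forall_update_le (X := fun i ↦ ProbabilityMeasure (X i))
    (x := bundle P) (y := bundle Q)
    (f := fun R ↦ ∫ x, f x ∂Measure.pi fun i ↦ (R i : Measure (X i))) fun R i hRi ↦ ?_
  have hoff (j : ι) (hj : j ≠ i) :
      (Function.update R i (bundle P i) j : Measure (X j)) = R j := by
    rw [Function.update_of_ne hj]
  have hstep := hf.integral_pi_le_of_eq_off hfm hoff
  rwa [Function.update_self, hRi] at hstep

end ProductMeasure

section Codebook

variable {X Xh : Type*} {ρ : X → Xh → ℝ}

/-- The distortion `min_{c ∈ C} Σ_i ρ(x_i, c_i)` of the best codeword for the source word `x`; the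
`sInf` gives the junk value `0` for the empty codebook. -/
noncomputable def minDistortion {ι : Type*} [Fintype ι] (ρ : X → Xh → ℝ) (C : Finset (ι → Xh))
    (x : ι → X) : ℝ :=
  sInf ((fun c ↦ ∑ i, ρ (x i) (c i)) '' (C : Set (ι → Xh)))

section minDistortion

variable {ι : Type*} [Fintype ι] {C : Finset (ι → Xh)}

lemma minDistortion_eq_inf' (ρ : X → Xh → ℝ) (hC : C.Nonempty) :
    minDistortion ρ C = C.inf' hC fun c (x : ι → X) ↦ ∑ i, ρ (x i) (c i) := by
  ext x
  rw [minDistortion, Finset.inf'_apply, Finset.inf'_eq_csInf_image]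

lemma measurable_minDistortion [MeasurableSpace X] (hρm : ∀ xh, Measurable fun x ↦ ρ x xh)
    (hC : C.Nonempty) : Measurable (minDistortion ρ C : (ι → X) → ℝ) := by
  rw [minDistortion_eq_inf' ρ hC]
  refine Finset.inf'_induction hC _ (fun _ h₁ _ h₂ ↦ h₁.inf h₂) fun c _ ↦ ?_
  exact Finset.measurable_fun_sum _ fun i _ ↦ (hρm (c i)).comp (measurable_pi_apply i)

lemma hasBoundedDifferences_minDistortion [DecidableEq ι] {K : ℝ}
    (hosc : ∀ x y xh, ρ x xh ≤ ρ y xh + K) (hC : C.Nonempty) :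
    HasBoundedDifferences (minDistortion ρ C : (ι → X) → ℝ) fun _ ↦ K := by
  rw [minDistortion_eq_inf' ρ hC]
  exact .finset_inf' hC fun c _ ↦ .sum_comp_apply fun i a b ↦ hosc a b (c i)

lemma card_mul_le_minDistortion {b : ℝ} (hb : ∀ x xh, b ≤ ρ x xh) (hC : C.Nonempty)
    (x : ι → X) : Fintype.card ι * b ≤ minDistortion ρ C x := by
  rw [minDistortion_eq_inf' ρ hC, Finset.inf'_apply]
  refine Finset.le_inf' _ _ fun c _ ↦ ?_
  simpa using Finset.sum_le_sum fun i (_ : i ∈ Finset.univ) ↦ hb (x i) (c i)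

end minDistortion

variable [MeasurableSpace X] {n N : ℕ} {C : Finset (Fin n → Xh)} {K b : ℝ}

lemma Dcode_eq_integral_minDistortion_div (ρ : X → Xh → ℝ) (P : Measure X)
    (C : Finset (Fin n → Xh)) :
    Dcode ρ n P C = (∫ x, minDistortion ρ C x ∂Measure.pi fun _ ↦ P) / n :=
  one_div_mul_eq_div _ _

lemma Dcode_le_Dcode_add_mul_dV (hρm : ∀ xh, Measurable fun x ↦ ρ x xh)
    (hosc : ∀ x y xh, ρ x xh ≤ ρ y xh + K) (hn : 1 ≤ n) (P Q : Measure X)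
    [IsProbabilityMeasure P] [IsProbabilityMeasure Q] (hC : C.Nonempty) :
    Dcode ρ n P C ≤ Dcode ρ n Q C + K * dV P Q := by
  have hn0 : (0 : ℝ) < n := by exact_mod_cast hn
  have hint : ∫ x, minDistortion ρ C x ∂Measure.pi (fun _ ↦ P) ≤
      ∫ x, minDistortion ρ C x ∂Measure.pi (fun _ ↦ Q) + K * dV P Q * n := by
    simpa [mul_comm] using (hasBoundedDifferences_minDistortion hosc hC).integral_pi_le
      (P := fun _ ↦ P) (Q := fun _ ↦ Q) (measurable_minDistortion hρm hC)
  rw [Dcode_eq_integral_minDistortion_div, Dcode_eq_integral_minDistortion_div,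
    div_add' _ _ _ hn0.ne']
  gcongr

lemma le_Dcode (hρm : ∀ xh, Measurable fun x ↦ ρ x xh) (hb : ∀ x xh, b ≤ ρ x xh)
    (hosc : ∀ x y xh, ρ x xh ≤ ρ y xh + K) (hn : 1 ≤ n) (P : Measure X)
    [IsProbabilityMeasure P] (hC : C.Nonempty) : b ≤ Dcode ρ n P C := by
  have hn0 : (0 : ℝ) < n := by exact_mod_cast hn
  have hint : Integrable (minDistortion ρ C) (Measure.pi fun _ : Fin n ↦ P) :=
    integrable_of_forall_le_add _ (measurable_minDistortion hρm hC)
      (hasBoundedDifferences_minDistortion hosc hC).le_add_sum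
  rw [Dcode_eq_integral_minDistortion_div, le_div_iff₀' hn0]
  simpa using integral_mono (integrable_const _) hint (card_mul_le_minDistortion hb hC)

lemma DhatN_le_DhatN_add_mul_dV [Nonempty Xh] (hρm : ∀ xh, Measurable fun x ↦ ρ x xh)
    (hb : ∀ x xh, b ≤ ρ x xh) (hosc : ∀ x y xh, ρ x xh ≤ ρ y xh + K) (hn : 1 ≤ n) (hN : 1 ≤ N)
    (P Q : Measure X) [IsProbabilityMeasure P] [IsProbabilityMeasure Q] :
    DhatN ρ n N P ≤ DhatN ρ n N Q + K * dV P Q := by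
  have : Nonempty {C : Finset (Fin n → Xh) // C.Nonempty ∧ C.card ≤ N} :=
    ⟨{Classical.arbitrary _}, Finset.singleton_nonempty _, by simpa using hN⟩
  have hbdd : BddBelow (Set.range fun C : {C : Finset (Fin n → Xh) // C.Nonempty ∧ C.card ≤ N} ↦
      Dcode ρ n P C.1) :=
    ⟨b, Set.forall_mem_range.2 fun C ↦ le_Dcode hρm hb hosc hn P C.2.1⟩
  refine le_ciInf_add fun C ↦ ?_
  exact (ciInf_le hbdd C).trans (Dcode_le_Dcode_add_mul_dV hρm hosc hn P Q C.2.1)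

end Codebook

theorem stmt4_general {X Xh : Type*} [MeasurableSpace X] [Nonempty Xh]
    {K b : ℝ} {ρ : X → Xh → ℝ} (hρm : ∀ xh, Measurable fun x ↦ ρ x xh)
    (hb : ∀ x xh, b ≤ ρ x xh) (hosc : ∀ x y xh, ρ x xh ≤ ρ y xh + K)
    {n N : ℕ} (hn : 1 ≤ n) (hN : 1 ≤ N)
    (P Q : Measure X) [IsProbabilityMeasure P] [IsProbabilityMeasure Q] :
    |DhatN ρ n N P - DhatN ρ n N Q| ≤ K * dV P Q ∧
    ∀ (δ : ℝ) (C : Finset (Fin n → Xh)), C.Nonempty →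
      Dcode ρ n Q C ≤ DhatN ρ n N Q + δ →
      Dcode ρ n P C ≤ DhatN ρ n N P + 2 * K * dV P Q + δ := by
  have hPQ := DhatN_le_DhatN_add_mul_dV hρm hb hosc hn hN P Q
  have hQP := DhatN_le_DhatN_add_mul_dV hρm hb hosc hn hN Q P
  rw [dV_comm Q P] at hQP
  refine ⟨abs_sub_le_iff.2 ⟨by linarith, by linarith⟩, fun δ C hC hCδ ↦ ?_⟩
  calc Dcode ρ n P C ≤ Dcode ρ n Q C + K * dV P Q :=
        Dcode_le_Dcode_add_mul_dV hρm hosc hn P Q hC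
    _ ≤ DhatN ρ n N Q + δ + K * dV P Q := by gcongr
    _ ≤ DhatN ρ n N P + 2 * K * dV P Q + δ := by linarith

/-- For a distortion measure `ρ : 𝒳 × 𝒳̂ → [0, K]` and any probability measures `P, Q`:
(i) `|D̂_N(P) - D̂_N(Q)| ≤ K · d_V(P, Q)`; and (ii) if `C*` is a codebook with
`1 ≤ |C*| ≤ N` and `D(Q, C*) ≤ D̂_N(Q) + δ` with `δ ≥ 0`, then
`D(P, C*) ≤ D̂_N(P) + 2K · d_V(P, Q) + δ`. -/
theorem stmt4 {X Xh : Type*} [MeasurableSpace X] [Nonempty Xh]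
    (K : ℝ) (hK : 0 < K) (ρ : X → Xh → ℝ)
    (hρm : ∀ xh : Xh, Measurable fun x => ρ x xh)
    (hρ0 : ∀ x xh, 0 ≤ ρ x xh) (hρK : ∀ x xh, ρ x xh ≤ K)
    (n N : ℕ) (hn : 1 ≤ n) (hN : 1 ≤ N)
    (P Q : Measure X) [IsProbabilityMeasure P] [IsProbabilityMeasure Q] :
    |DhatN ρ n N P - DhatN ρ n N Q| ≤ K * dV P Q ∧
    ∀ δ : ℝ, 0 ≤ δ → ∀ Cstar : Finset (Fin n → Xh),
      Cstar.Nonempty → Cstar.card ≤ N →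
      Dcode ρ n Q Cstar ≤ DhatN ρ n N Q + δ →
      Dcode ρ n P Cstar ≤ DhatN ρ n N P + 2 * K * dV P Q + δ := by
  have h := stmt4_general hρm hρ0 (fun x y xh ↦ le_add_of_nonneg_of_le (hρ0 y xh) (hρK x xh))
    hn hN P Q
  exact ⟨h.1, fun δ _ C hC _ ↦ h.2 δ C hC⟩
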